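/- Suppose a saddle point exists and let (xᵏ, yᵏ, x̄ᵏ, ȳᵏ) be a Douglas–Rachford iteration with step sizes σ, τ > 0. Then for every bounded X₀ × Y₀ ⊆ dom F × dom G containing a saddle point, the restricted primal-dual gap satisfies 𝔊_{X₀×Y₀}(xᵏ, yᵏ) ≥ 0 for every k ≥ 1 and lim_{k→∞} 𝔊_{X₀×Y₀}(xᵏ, yᵏ) = 0. -/

import Mathlib

/-!
The Douglas--Rachford update is the relaxed fixed-point map `z ↦ z + q - p`, where `z = (ub, vb)`,
`p = (u, v)` is the resolvent of the subdifferentials at `z`, and `q = p + z⁺ - z` is the resolvent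
of the skew operator `S (x, y) = (K* y, -K x)` at `2 p - z`. Everything is measured in the norm with
weights `σ⁻¹`, `τ⁻¹`.

A saddle point `p* = (xs, ys)` gives the fixed point `z* = (xs - σ K* ys, ys + τ K xs)`.
Monotonicity of the subdifferentials and skewness of `S` give (`lyapunov`, `step_estimate`)
`‖z⁺ - z*‖² + ‖z⁺ - z‖² ≤ ‖z - z*‖²` and, in each component, `‖p - p*‖ ≤ ‖z - z*‖`. Hence `z - z⁺ → 0`, while the iterates
`p` stay bounded.

Inserting the iterates' subgradients into the Lagrangian difference gives (`gap_term_le`), for every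
`p' ∈ X₀ × Y₀`, a bound by `⟪M w + S w, p - p'⟫` with `w = z - z⁺` and `M = diag (σ⁻¹, τ⁻¹)`.
As `X₀ × Y₀` and the iterates are bounded, this tends to zero uniformly in `p'`. Nonnegativity is
the saddle-point inequality, applied to the term of the supremum at the saddle point.
-/

open scoped RealInnerProductSpace
open Filter

noncomputable section

variable {X Y : Type*} [NormedAddCommGroup X] [InnerProductSpace ℝ X] [CompleteSpace X]
  [NormedAddCommGroup Y] [InnerProductSpace ℝ Y] [CompleteSpace Y]

/-- The convex subdifferential of an extended-real-valued functional. -/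
def ediff (F : X → EReal) (x : X) : Set X :=
  {ξ : X | ∀ z : X, F x + ((⟪ξ, z - x⟫ : ℝ) : EReal) ≤ F z}

/-- The effective domain. -/
def edom (F : X → EReal) : Set X := {x : X | F x ≠ ⊤}

/-- Properness: nowhere `⊥` and somewhere finite. -/
def Proper (F : X → EReal) : Prop := (∀ x, F x ≠ ⊥) ∧ ∃ x, F x ≠ ⊤

/-- Convexity of an extended-real-valued functional. -/
def ConvexE (F : X → EReal) : Prop :=
  ∀ x z : X, ∀ l : ℝ, 0 ≤ l → l ≤ 1 →
    F (l • x + (1 - l) • z) ≤ (l : EReal) * F x + ((1 - l : ℝ) : EReal) * F z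

/-- Saddle points of the Lagrangian `L(x,y) = ⟪Kx, y⟫ + F(x) - G(y)`. -/
def IsSaddle (K : X →L[ℝ] Y) (F : X → EReal) (G : Y → EReal) (xs : X) (ys : Y) : Prop :=
  xs ∈ edom F ∧ ys ∈ edom G ∧
    (-(ContinuousLinearMap.adjoint K) ys) ∈ ediff F xs ∧ K xs ∈ ediff G ys

/-- The restricted primal-dual gap `𝔊_{X₀ × Y₀}`. -/
def gap (K : X →L[ℝ] Y) (F : X → EReal) (G : Y → EReal)
    (X₀ : Set X) (Y₀ : Set Y) (x : X) (y : Y) : EReal :=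
  ⨆ x' ∈ X₀, ⨆ y' ∈ Y₀,
    (((⟪K x, y'⟫ - ⟪K x', y⟫ - (G y').toReal - (F x').toReal : ℝ) : EReal) + F x + G y)

/-- The Douglas--Rachford iteration for the saddle-point problem. -/
def IsDR (K : X →L[ℝ] Y) (F : X → EReal) (G : Y → EReal) (σ τ : ℝ)
    (u : ℕ → X) (v : ℕ → Y) (ub : ℕ → X) (vb : ℕ → Y) : Prop :=
  ∀ k : ℕ,
    σ⁻¹ • (ub k - u (k+1)) ∈ ediff F (u (k+1)) ∧
    τ⁻¹ • (vb k - v (k+1)) ∈ ediff G (v (k+1)) ∧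
    ub (k+1) = u (k+1) - σ • (ContinuousLinearMap.adjoint K) (v (k+1) + vb (k+1) - vb k) ∧
    vb (k+1) = v (k+1) + τ • K (u (k+1) + ub (k+1) - ub k)

theorem ne_top_of_mem_ediff {F : X → EReal} (hF : Proper F) {x ξ : X} (h : ξ ∈ ediff F x) :
    F x ≠ ⊤ := by
  obtain ⟨z, hz⟩ := hF.2
  intro hx
  have := h z
  rw [hx, EReal.top_add_coe] at this
  exact hz (top_le_iff.1 this)

theorem ediff_toReal {F : X → EReal} (hF : Proper F) {x ξ : X} (h : ξ ∈ ediff F x)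
    {z : X} (hz : F z ≠ ⊤) : (F x).toReal + ⟪ξ, z - x⟫ ≤ (F z).toReal := by
  have hx := ne_top_of_mem_ediff hF h
  have := h z
  rw [← EReal.coe_toReal hx (hF.1 x), ← EReal.coe_toReal hz (hF.1 z)] at this
  exact_mod_cast this

theorem ediff_monotone {F : X → EReal} (hF : Proper F) {x ξ x' ξ' : X} (h : ξ ∈ ediff F x)
    (h' : ξ' ∈ ediff F x') : 0 ≤ ⟪ξ - ξ', x - x'⟫ := by
  have h1 := ediff_toReal hF h (ne_top_of_mem_ediff hF h')
  have h2 := ediff_toReal hF h' (ne_top_of_mem_ediff hF h)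
  simp only [inner_sub_left, inner_sub_right] at *
  linarith

/-- Fejér-type estimate for one step, in coordinates centred at the fixed point: `d = z - z*`,
`e = p - p*`, `f = q - p*`. -/
theorem lyapunov (K : X →L[ℝ] Y) {σ τ : ℝ} (hσ : 0 < σ) (hτ : 0 < τ)
    {d₁ e₁ f₁ : X} {d₂ e₂ f₂ : Y}
    (h₁ : 0 ≤ ⟪d₁ - e₁, e₁⟫) (h₂ : 0 ≤ ⟪d₂ - e₂, e₂⟫)
    (k₁ : (2 : ℝ) • e₁ - d₁ - f₁ = σ • (ContinuousLinearMap.adjoint K) f₂)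
    (k₂ : (2 : ℝ) • e₂ - d₂ - f₂ = -(τ • K f₁)) :
    (σ⁻¹ * ‖d₁ + f₁ - e₁‖ ^ 2 + τ⁻¹ * ‖d₂ + f₂ - e₂‖ ^ 2)
      + (σ⁻¹ * ‖f₁ - e₁‖ ^ 2 + τ⁻¹ * ‖f₂ - e₂‖ ^ 2)
      ≤ σ⁻¹ * ‖d₁‖ ^ 2 + τ⁻¹ * ‖d₂‖ ^ 2 := by
  have a₁ : σ⁻¹ * ⟪(2 : ℝ) • e₁ - d₁ - f₁, f₁⟫ = ⟪K f₁, f₂⟫ := by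
    rw [k₁, inner_smul_left, ContinuousLinearMap.adjoint_inner_left, real_inner_comm]
    simp [hσ.ne']
  have a₂ : τ⁻¹ * ⟪(2 : ℝ) • e₂ - d₂ - f₂, f₂⟫ = -⟪K f₁, f₂⟫ := by
    rw [k₂, inner_neg_left, inner_smul_left]
    simp [hτ.ne']
  have b₁ := mul_nonneg (inv_pos.2 hσ).le h₁
  have b₂ := mul_nonneg (inv_pos.2 hτ).le h₂
  simp only [← real_inner_self_eq_norm_sq, inner_add_left, inner_add_right, inner_sub_left,
    inner_sub_right, inner_smul_left, RCLike.conj_to_real] at *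
  rw [real_inner_comm d₁ f₁, real_inner_comm d₁ e₁, real_inner_comm f₁ e₁,
    real_inner_comm d₂ f₂, real_inner_comm d₂ e₂, real_inner_comm f₂ e₂] at *
  nlinarith

theorem norm_le_of_inner_sub_nonneg {d e : X} (h : 0 ≤ ⟪d - e, e⟫) : ‖e‖ ≤ ‖d‖ := by
  rw [inner_sub_left, real_inner_self_eq_norm_sq] at h
  have := real_inner_le_norm d e
  by_contra! hlt
  nlinarith [norm_nonneg d, norm_nonneg e]

/-- For a step `(xb, yb) ↦ (x, y) ↦ (a, b)`, with `(a, b)` the next barred pair, this bounds each term of the gap at `(x, y)` by a multiple of the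
step length of the barred variables. -/
theorem gap_term_le {F : X → EReal} {G : Y → EReal} (hF : Proper F) (hG : Proper G)
    (K : X →L[ℝ] Y) {σ τ : ℝ} (hσ : 0 < σ) (hτ : 0 < τ) {x xb a x' : X} {y yb b y' : Y}
    (hx : σ⁻¹ • (xb - x) ∈ ediff F x) (hy : τ⁻¹ • (yb - y) ∈ ediff G y)
    (ha : a = x - σ • (ContinuousLinearMap.adjoint K) (y + b - yb))
    (hb : b = y + τ • K (x + a - xb)) (hx' : F x' ≠ ⊤) (hy' : G y' ≠ ⊤)
    {C : ℝ} (hCx : ‖x - x'‖ ≤ C) (hCy : ‖y - y'‖ ≤ C) :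
    ⟪K x, y'⟫ - ⟪K x', y⟫ - (G y').toReal - (F x').toReal + (F x).toReal + (G y).toReal
      ≤ (σ⁻¹ * ‖xb - a‖ + ‖K‖ * ‖yb - b‖) * C + (τ⁻¹ * ‖yb - b‖ + ‖K‖ * ‖xb - a‖) * C := by
  have h1 := ediff_toReal hF hx hx'
  have h2 := ediff_toReal hG hy hy'
  have e1 : σ⁻¹ • (xb - x) + (ContinuousLinearMap.adjoint K) y
      = σ⁻¹ • (xb - a) + (ContinuousLinearMap.adjoint K) (yb - b) := by
    have : σ⁻¹ • (xb - a) = σ⁻¹ • (xb - x) + (ContinuousLinearMap.adjoint K) (y + b - yb) := by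
      conv_lhs => rw [ha]
      rw [show xb - (x - σ • (ContinuousLinearMap.adjoint K) (y + b - yb))
        = (xb - x) + σ • (ContinuousLinearMap.adjoint K) (y + b - yb) by abel, smul_add,
        inv_smul_smul₀ hσ.ne']
    rw [this, add_assoc, ← map_add]
    congr 2
    abel
  have e2 : τ⁻¹ • (yb - y) - K x = τ⁻¹ • (yb - b) - K (xb - a) := by
    have : τ⁻¹ • (yb - b) = τ⁻¹ • (yb - y) - K (x + a - xb) := by
      conv_lhs => rw [hb]
      rw [show yb - (y + τ • K (x + a - xb)) = (yb - y) - τ • K (x + a - xb) by abel, smul_sub,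
        inv_smul_smul₀ hτ.ne']
    rw [this, sub_sub, ← map_add]
    congr 2
    abel
  have n1 : ‖σ⁻¹ • (xb - a) + (ContinuousLinearMap.adjoint K) (yb - b)‖
      ≤ σ⁻¹ * ‖xb - a‖ + ‖K‖ * ‖yb - b‖ := by
    refine (norm_add_le _ _).trans (add_le_add ?_ ?_)
    · rw [norm_smul, Real.norm_of_nonneg (inv_pos.2 hσ).le]
    · simpa using (ContinuousLinearMap.adjoint K).le_opNorm (yb - b)
  have n2 : ‖τ⁻¹ • (yb - b) - K (xb - a)‖ ≤ τ⁻¹ * ‖yb - b‖ + ‖K‖ * ‖xb - a‖ := by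
    refine (norm_sub_le _ _).trans (add_le_add ?_ (K.le_opNorm _))
    rw [norm_smul, Real.norm_of_nonneg (inv_pos.2 hτ).le]
  have m1 : ⟪σ⁻¹ • (xb - x) + (ContinuousLinearMap.adjoint K) y, x - x'⟫
      ≤ (σ⁻¹ * ‖xb - a‖ + ‖K‖ * ‖yb - b‖) * C := by
    rw [e1]
    exact (real_inner_le_norm _ _).trans
      (mul_le_mul n1 hCx (norm_nonneg _) ((norm_nonneg _).trans n1))
  have m2 : ⟪τ⁻¹ • (yb - y) - K x, y - y'⟫ ≤ (τ⁻¹ * ‖yb - b‖ + ‖K‖ * ‖xb - a‖) * C := by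
    rw [e2]
    exact (real_inner_le_norm _ _).trans
      (mul_le_mul n2 hCy (norm_nonneg _) ((norm_nonneg _).trans n2))
  rw [inner_add_left, ContinuousLinearMap.adjoint_inner_left] at m1
  rw [inner_sub_left] at m2
  rw [← neg_sub x x', inner_neg_right] at h1
  rw [← neg_sub y y', inner_neg_right] at h2
  rw [map_sub, inner_sub_right y, real_inner_comm (K x) y, real_inner_comm (K x') y] at m1
  rw [inner_sub_right (K x)] at m2
  linarith

/-- The estimates behind asymptotic regularity and boundedness, for one Douglas--Rachford step. -/
theorem step_estimate {F : X → EReal} {G : Y → EReal} (hF : Proper F) (hG : Proper G)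
    (K : X →L[ℝ] Y) {σ τ : ℝ} (hσ : 0 < σ) (hτ : 0 < τ) {x xb a xs : X} {y yb b ys : Y}
    (hx : σ⁻¹ • (xb - x) ∈ ediff F x) (hy : τ⁻¹ • (yb - y) ∈ ediff G y)
    (ha : a = x - σ • (ContinuousLinearMap.adjoint K) (y + b - yb))
    (hb : b = y + τ • K (x + a - xb)) (hs : IsSaddle K F G xs ys) :
    (σ⁻¹ * ‖a - (xs - σ • (ContinuousLinearMap.adjoint K) ys)‖ ^ 2
        + τ⁻¹ * ‖b - (ys + τ • K xs)‖ ^ 2)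
      + (σ⁻¹ * ‖xb - a‖ ^ 2 + τ⁻¹ * ‖yb - b‖ ^ 2)
      ≤ σ⁻¹ * ‖xb - (xs - σ • (ContinuousLinearMap.adjoint K) ys)‖ ^ 2
        + τ⁻¹ * ‖yb - (ys + τ • K xs)‖ ^ 2 ∧
    ‖x - xs‖ ≤ ‖xb - (xs - σ • (ContinuousLinearMap.adjoint K) ys)‖ ∧
    ‖y - ys‖ ≤ ‖yb - (ys + τ • K xs)‖ := by
  have h1 : 0 ≤ ⟪(xb - (xs - σ • (ContinuousLinearMap.adjoint K) ys)) - (x - xs), x - xs⟫ := by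
    have := mul_nonneg hσ.le (ediff_monotone hF hx hs.2.2.1)
    rw [← real_inner_smul_left, smul_sub, smul_inv_smul₀ hσ.ne'] at this
    rwa [smul_neg, show xb - x - -(σ • (ContinuousLinearMap.adjoint K) ys)
      = xb - (xs - σ • (ContinuousLinearMap.adjoint K) ys) - (x - xs) by abel] at this
  have h2 : 0 ≤ ⟪(yb - (ys + τ • K xs)) - (y - ys), y - ys⟫ := by
    have := mul_nonneg hτ.le (ediff_monotone hG hy hs.2.2.2)
    rw [← real_inner_smul_left, smul_sub, smul_inv_smul₀ hτ.ne'] at this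
    rwa [show yb - y - τ • K xs = yb - (ys + τ • K xs) - (y - ys) by abel] at this
  refine ⟨?_, norm_le_of_inner_sub_nonneg h1, norm_le_of_inner_sub_nonneg h2⟩
  have := lyapunov K hσ hτ (f₁ := x + a - xb - xs) (f₂ := y + b - yb - ys) h1 h2
    (by
      have : σ • (ContinuousLinearMap.adjoint K) (y + b - yb) = x - a := by
        rw [eq_sub_iff_add_eq, add_comm, ← eq_sub_iff_add_eq, ← ha]
      rw [map_sub, smul_sub σ, this, two_smul]; abel)
    (by
      have : τ • K (x + a - xb) = b - y := by
        rw [eq_sub_iff_add_eq, add_comm, ← hb]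
      rw [map_sub, smul_sub τ, this, two_smul]; abel)
  rw [norm_sub_rev xb a, norm_sub_rev yb b]
  rw [show a - (xs - σ • (ContinuousLinearMap.adjoint K) ys) =
      xb - (xs - σ • (ContinuousLinearMap.adjoint K) ys) + (x + a - xb - xs) - (x - xs) by abel,
    show b - (ys + τ • K xs) = yb - (ys + τ • K xs) + (y + b - yb - ys) - (y - ys) by abel,
    show a - xb = x + a - xb - xs - (x - xs) by abel,
    show b - yb = y + b - yb - ys - (y - ys) by abel]
  exact this


/-- Corollary: restricted primal-dual gaps along the Douglas--Rachford
iteration are nonnegative and vanish in the limit. -/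
theorem statement6
    (F : X → EReal) (G : Y → EReal) (K : X →L[ℝ] Y)
    (hFp : Proper F) (hFc : ConvexE F) (hFl : LowerSemicontinuous F)
    (hGp : Proper G) (hGc : ConvexE G) (hGl : LowerSemicontinuous G)
    (σ τ : ℝ) (hσ : 0 < σ) (hτ : 0 < τ)
    (u : ℕ → X) (v : ℕ → Y) (ub : ℕ → X) (vb : ℕ → Y)
    (hDR : IsDR K F G σ τ u v ub vb) :
    ∀ X₀ : Set X, ∀ Y₀ : Set Y, X₀ ⊆ edom F → Y₀ ⊆ edom G →
      Bornology.IsBounded X₀ → Bornology.IsBounded Y₀ →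
      (∃ xs ∈ X₀, ∃ ys ∈ Y₀, IsSaddle K F G xs ys) →
      (∀ k : ℕ, 1 ≤ k → 0 ≤ gap K F G X₀ Y₀ (u k) (v k)) ∧
      Tendsto (fun k => gap K F G X₀ Y₀ (u k) (v k)) atTop (nhds (0 : EReal)) := by
  intro X₀ Y₀ hX₀ hY₀ bX bY ⟨xs, hxs, ys, hys, hs⟩
  have hFt : ∀ k, F (u (k+1)) ≠ ⊤ := fun k => ne_top_of_mem_ediff hFp (hDR k).1
  have hGt : ∀ k, G (v (k+1)) ≠ ⊤ := fun k => ne_top_of_mem_ediff hGp (hDR k).2.1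
  have hval : ∀ (r : ℝ) k, ((r : ℝ) : EReal) + F (u (k+1)) + G (v (k+1))
      = ((r + (F (u (k+1))).toReal + (G (v (k+1))).toReal : ℝ) : EReal) := by
    intro r k
    rw [EReal.coe_add, EReal.coe_add, EReal.coe_toReal (hFt k) (hFp.1 _),
      EReal.coe_toReal (hGt k) (hGp.1 _)]
  have hpos : ∀ k, 0 ≤ gap K F G X₀ Y₀ (u (k+1)) (v (k+1)) := by
    intro k
    refine le_trans ?_ (le_iSup₂_of_le xs hxs (le_iSup₂_of_le ys hys le_rfl))
    rw [hval]
    have h1 := ediff_toReal hFp hs.2.2.1 (hFt k)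
    have h2 := ediff_toReal hGp hs.2.2.2 (hGt k)
    rw [inner_neg_left, ContinuousLinearMap.adjoint_inner_left, map_sub, inner_sub_right,
      real_inner_comm (K (u (k+1))), real_inner_comm (K xs)] at h1
    rw [inner_sub_right] at h2
    exact_mod_cast (by linarith : (0:ℝ) ≤ ⟪K (u (k+1)), ys⟫ - ⟪K xs, v (k+1)⟫ - (G ys).toReal
      - (F xs).toReal + (F (u (k+1))).toReal + (G (v (k+1))).toReal)
  refine ⟨fun k hk => ?_, ?_⟩
  · obtain ⟨j, rfl⟩ := Nat.exists_eq_add_of_le' hk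
    exact hpos j
  -- The squared weighted distance of the barred iterates to the fixed point is a Lyapunov function.
  let V : ℕ → ℝ := fun k => σ⁻¹ * ‖ub k - (xs - σ • (ContinuousLinearMap.adjoint K) ys)‖ ^ 2
        + τ⁻¹ * ‖vb k - (ys + τ • K xs)‖ ^ 2
  have hσ' := inv_pos.2 hσ
  have hτ' := inv_pos.2 hτ
  have hstep := fun k => step_estimate hFp hGp K hσ hτ (hDR k).1 (hDR k).2.1 (hDR k).2.2.1
    (hDR k).2.2.2 hs
  have hV0 : ∀ k, 0 ≤ V k := fun k => by positivity
  have hdec : ∀ k, V (k+1) + (σ⁻¹ * ‖ub k - ub (k+1)‖ ^ 2 + τ⁻¹ * ‖vb k - vb (k+1)‖ ^ 2) ≤ V k :=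
    fun k => (hstep k).1
  have hanti : Antitone V := antitone_nat_of_succ_le fun k => by
    have := hdec k
    have : 0 ≤ σ⁻¹ * ‖ub k - ub (k+1)‖ ^ 2 + τ⁻¹ * ‖vb k - vb (k+1)‖ ^ 2 := by positivity
    linarith
  have hdiff : Tendsto (fun k => V k - V (k+1)) atTop (nhds 0) := by
    have h := tendsto_atTop_ciInf hanti ⟨0, by rintro _ ⟨k, rfl⟩; exact hV0 k⟩
    simpa using h.sub (h.comp (tendsto_add_atTop_nat 1))
  have hw1 : Tendsto (fun k => ‖ub k - ub (k+1)‖) atTop (nhds 0) := by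
    have h : Tendsto (fun k => √(σ * (V k - V (k+1)))) atTop (nhds 0) := by
      simpa using (hdiff.const_mul σ).sqrt
    refine squeeze_zero (fun _ => norm_nonneg _) (fun k => Real.le_sqrt_of_sq_le ?_) h
    have h2 : 0 ≤ τ⁻¹ * ‖vb k - vb (k+1)‖ ^ 2 := by positivity
    have h3 := hdec k
    rw [← inv_mul_le_iff₀ hσ]
    linarith
  have hw2 : Tendsto (fun k => ‖vb k - vb (k+1)‖) atTop (nhds 0) := by
    have h : Tendsto (fun k => √(τ * (V k - V (k+1)))) atTop (nhds 0) := by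
      simpa using (hdiff.const_mul τ).sqrt
    refine squeeze_zero (fun _ => norm_nonneg _) (fun k => Real.le_sqrt_of_sq_le ?_) h
    have h2 : 0 ≤ σ⁻¹ * ‖ub k - ub (k+1)‖ ^ 2 := by positivity
    have h3 := hdec k
    rw [← inv_mul_le_iff₀ hτ]
    linarith
  have hu : ∀ k, ‖u (k+1) - xs‖ ≤ √(σ * V 0) := fun k => by
    refine (hstep k).2.1.trans (Real.le_sqrt_of_sq_le ?_)
    rw [← inv_mul_le_iff₀ hσ]
    have h2 : 0 ≤ τ⁻¹ * ‖vb k - (ys + τ • K xs)‖ ^ 2 := by positivity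
    have h3 : V k ≤ V 0 := hanti (Nat.zero_le k)
    simp only [V] at h3 ⊢
    linarith
  have hv : ∀ k, ‖v (k+1) - ys‖ ≤ √(τ * V 0) := fun k => by
    refine (hstep k).2.2.trans (Real.le_sqrt_of_sq_le ?_)
    rw [← inv_mul_le_iff₀ hτ]
    have h2 : 0 ≤ σ⁻¹ * ‖ub k - (xs - σ • (ContinuousLinearMap.adjoint K) ys)‖ ^ 2 := by positivity
    have h3 : V k ≤ V 0 := hanti (Nat.zero_le k)
    simp only [V] at h3 ⊢
    linarith
  obtain ⟨R₁, hR₁⟩ := bX.exists_norm_le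
  obtain ⟨R₂, hR₂⟩ := bY.exists_norm_le
  obtain ⟨C, hC1, hC2⟩ : ∃ C : ℝ, (∀ k, ∀ x' ∈ X₀, ‖u (k+1) - x'‖ ≤ C) ∧
      (∀ k, ∀ y' ∈ Y₀, ‖v (k+1) - y'‖ ≤ C) := by
    refine ⟨max (√(σ * V 0) + (R₁ + R₁)) (√(τ * V 0) + (R₂ + R₂)), fun k x' hx' => ?_,
      fun k y' hy' => ?_⟩
    · refine le_trans ?_ (le_max_left _ _)
      have := norm_sub_le_norm_sub_add_norm_sub (u (k+1)) xs x'
      have := norm_sub_le xs x'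
      linarith [hu k, hR₁ x' hx', hR₁ xs hxs]
    · refine le_trans ?_ (le_max_right _ _)
      have := norm_sub_le_norm_sub_add_norm_sub (v (k+1)) ys y'
      have := norm_sub_le ys y'
      linarith [hv k, hR₂ y' hy', hR₂ ys hys]
  -- The index is shifted because only the iterates from `1` on are constrained.
  rw [← tendsto_add_atTop_iff_nat 1]
  let B : ℕ → ℝ := fun k => (σ⁻¹ * ‖ub k - ub (k+1)‖ + ‖K‖ * ‖vb k - vb (k+1)‖) * C
    + (τ⁻¹ * ‖vb k - vb (k+1)‖ + ‖K‖ * ‖ub k - ub (k+1)‖) * C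
  have hB : Tendsto B atTop (nhds 0) := by
    simpa using (((hw1.const_mul σ⁻¹).add (hw2.const_mul ‖K‖)).mul_const C).add
      (((hw2.const_mul τ⁻¹).add (hw1.const_mul ‖K‖)).mul_const C)
  have hB' : Tendsto (fun k => (B k : EReal)) atTop (nhds (0 : EReal)) := by
    simpa using EReal.tendsto_coe.2 hB
  refine tendsto_of_tendsto_of_tendsto_of_le_of_le tendsto_const_nhds hB' hpos fun k => ?_
  refine iSup₂_le fun x' hx' => iSup₂_le fun y' hy' => ?_
  rw [hval]
  exact EReal.coe_le_coe_iff.2 (gap_term_le hFp hGp K hσ hτ (hDR k).1 (hDR k).2.1 (hDR k).2.2.1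
    (hDR k).2.2.2 (hX₀ hx') (hY₀ hy') (hC1 k x' hx') (hC2 k y' hy'))

end
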